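/- For (ε₁,…,ε_n) = (1,…,1) (so 𝒲 = V^{⊗n} with V two-dimensional), the vector J_{n,j} ∈ 𝒲⊗𝒲 satisfies Δ(e_i) J_{n,j} = 0 for all 1 ≤ i ≤ n−1 and all 0 ≤ j ≤ n, where Δ(e_i) = 1⊗e_i + e_i⊗k_i with the type-A actions π_x and π_y on the two factors (for any nonzero parameters x, y). -/

import Mathlib

/-!
Write `p` and `r = p + 1` for the two positions on which `e_r` acts (`r ≥ 1`, so the spectral
parameters do not appear), and `σ` for the transposition of `p` and `r`.

On `|a⟩⊗|1-a⟩` the summand `1⊗e_r` is nonzero exactly when `(a_p, a_r) = (0, 1)`, and then it gives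
`|a⟩⊗|σ(1-a)⟩`. The summand `e_r⊗k_r` is nonzero exactly when `(a_p, a_r) = (1, 0)`, and then it
gives `-q⁻¹ |σa⟩⊗|1-a⟩`. Hence the image of `a` under the first summand is proportional to the image
of `σa` under the second. Interchanging adjacent entries `(0, 1)` into `(1, 0)` raises `inv` by
exactly one (`inv_swap`), so the weights `q^{inv(a)}` and `-q⁻¹ q^{inv(σa)}` cancel (`pair_cancel`).
The theorem follows by reindexing the second sum along `a ↦ σa`.
-/

open scoped BigOperators

set_option synthInstance.maxHeartbeats 1000000
set_option maxHeartbeats 1000000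

noncomputable section

namespace TetraGQ

/-! ## Scalar ingredients -/

/-- `(a;qb)_m = ∏_{k=0}^{m-1} (1 - a qb^k)`. -/
def poch (qb a : ℂ) (m : ℕ) : ℂ := ∏ k ∈ Finset.range m, (1 - a * qb ^ k)

/-- The `q`-binomial `binom(m,k)_qb`, zero unless `k ≤ m`. -/
def qbinom (qb : ℂ) (m k : ℕ) : ℂ :=
  if k ≤ m then poch qb qb m / (poch qb qb k * poch qb qb (m - k)) else 0

/-- `[m] = (q^m - q^{-m})/(q - q^{-1})`. -/
def qnum (q : ℂ) (m : ℕ) : ℂ := (q ^ m - q⁻¹ ^ m) / (q - q⁻¹)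

/-- `[m]! = ∏_{k=1}^m [k]`. -/
def qfac (q : ℂ) (m : ℕ) : ℂ := ∏ k ∈ Finset.range m, qnum q (k + 1)

/-- The symmetric `q`-binomial `[m choose k]`, zero unless `k ≤ m`. -/
def qbin (q : ℂ) (m k : ℕ) : ℂ :=
  if k ≤ m then qfac q m / (qfac q k * qfac q (m - k)) else 0

/-- The 3D `R` matrix entry `R^{a,b,c}_{i,j,k}`. -/
def R3 (q : ℂ) (a b c i j k : ℕ) : ℂ :=
  (if a + b = i + j ∧ b + c = j + k then (1 : ℂ) else 0) *
    ∑ lam ∈ Finset.range (b + 1),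
      (-1 : ℂ) ^ lam *
        q ^ ((i : ℤ) * ((c : ℤ) - (j : ℤ)) + ((k : ℤ) + 1) * (lam : ℤ) +
            ((b : ℤ) - (lam : ℤ)) * ((b : ℤ) - (lam : ℤ) - (k : ℤ))) *
        (poch (q ^ 2) (q ^ 2) (c + (b - lam)) / poch (q ^ 2) (q ^ 2) c) *
        qbinom (q ^ 2) i (b - lam) * qbinom (q ^ 2) j lam

/-- The 3D `L` matrix entry `L^{a,b,c}_{i,j,k}`. -/
def L3 (q : ℂ) (a b c i j k : ℕ) : ℂ :=
  if a = 0 ∧ b = 0 ∧ i = 0 ∧ j = 0 ∧ c = k then 1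
  else if a = 1 ∧ b = 1 ∧ i = 1 ∧ j = 1 ∧ c = k then 1
  else if a = 0 ∧ b = 1 ∧ i = 0 ∧ j = 1 ∧ c = k then -q ^ (k + 1)
  else if a = 1 ∧ b = 0 ∧ i = 1 ∧ j = 0 ∧ c = k then q ^ k
  else if a = 0 ∧ b = 1 ∧ i = 1 ∧ j = 0 ∧ c + 1 = k then 1 - q ^ (2 * k)
  else if a = 1 ∧ b = 0 ∧ i = 0 ∧ j = 1 ∧ c = k + 1 then 1
  else 0

/-- `S^(0) = R`, `S^(1) = L`. -/
def Sg (q : ℂ) (e : Bool) (a b c i j k : ℕ) : ℂ :=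
  if e then L3 q a b c i j k else R3 q a b c i j k

/-- Coefficient of `z^{c0}` in the trace solution matrix element
`S₀(z)^{a,b}_{i,j}`. -/
def trCoef (q : ℂ) {n : ℕ} [NeZero n] (ε : Fin n → Bool) (a b i j : Fin n → ℕ)
    (c0 : ℕ) : ℂ :=
  ∑ᶠ c : Fin n → ℕ,
    if c 0 = c0 then
      ∏ t : Fin n, Sg q (ε t) (a t) (b t) (c t) (i t) (j t) (c (t + 1))
    else 0

/-- Coefficient of `z^{c0}` in the boundary solution matrix element
`S₀^{1,1}(z)^{a,b}_{i,j}`. -/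
def bdCoef (q : ℂ) {n : ℕ} (ε : Fin n → Bool) (a b i j : Fin n → ℕ) (c0 : ℕ) : ℂ :=
  ∑ᶠ c : Fin (n + 1) → ℕ,
    if c 0 = c0 then
      poch (q ^ 2) (q ^ 2) c0 / (poch q q c0 * poch q q (c (Fin.last n))) *
        ∏ t : Fin n, Sg q (ε t) (a t) (b t) (c t.castSucc) (i t) (j t) (c t.succ)
    else 0

/-- Coefficient of `z^{c0}` in the boundary solution matrix element
`S₀^{s,t}(z)^{a,b}_{i,j}`. -/
def bdCoefST (q : ℂ) (s t : ℕ) {n : ℕ} (ε : Fin n → Bool) (a b i j : Fin n → ℕ)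
    (c0 : ℕ) : ℂ :=
  ∑ᶠ c : Fin (n + 1) → ℕ,
    if c 0 = c0 then
      poch (q ^ 2) (q ^ 2) (s * c0) /
          (poch (q ^ s ^ 2) (q ^ s ^ 2) c0 * poch (q ^ t ^ 2) (q ^ t ^ 2) (c (Fin.last n))) *
        ∏ u : Fin n,
          Sg q (ε u) (a u) (b u)
            (if u.castSucc = 0 then s * c0 else c u.castSucc) (i u) (j u)
            (if u.succ = Fin.last n then t * c (Fin.last n) else c u.succ)
    else 0

/-! ## The spaces `𝒲` and `𝒲⊗𝒲` -/

/-- `m` is an admissible occupation vector: at positions with `ε = 1` the entry is `≤ 1`. -/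
def Ok {n : ℕ} (ε : Fin n → Bool) (m : Fin n → ℕ) : Prop := ∀ t, ε t = true → m t ≤ 1

instance {n : ℕ} (ε : Fin n → Bool) : DecidablePred (Ok ε) := fun m =>
  decidable_of_iff (∀ t, ε t = true → m t ≤ 1) Iff.rfl

/-- Basis labels of `𝒲`. -/
def Idx {n : ℕ} (ε : Fin n → Bool) : Type := {m : Fin n → ℕ // Ok ε m}

/-- The space `𝒲` with basis `|m⟩`, over the field `L`. -/
abbrev W (L : Type) [Field L] {n : ℕ} (ε : Fin n → Bool) : Type := Idx ε →₀ L

/-- The space `𝒲 ⊗ 𝒲` with basis `|a⟩⊗|b⟩`, over the field `L`. -/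
abbrev WW (L : Type) [Field L] {n : ℕ} (ε : Fin n → Bool) : Type := (Idx ε × Idx ε) →₀ L

/-- The ket `|m⟩ ∈ 𝒲`; it is `0` if any coordinate is out of range. -/
def ket (L : Type) [Field L] {n : ℕ} (ε : Fin n → Bool) (m : Fin n → ℤ) : W L ε :=
  if h : (∀ t, 0 ≤ m t) ∧ Ok ε (fun t => (m t).toNat) then
    Finsupp.single ⟨fun t => (m t).toNat, h.2⟩ 1
  else 0

/-- The ket `|a⟩⊗|b⟩ ∈ 𝒲⊗𝒲`; it is `0` if any coordinate is out of range. -/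
def kk (L : Type) [Field L] {n : ℕ} (ε : Fin n → Bool) (a b : Fin n → ℤ) : WW L ε :=
  if h : ((∀ t, 0 ≤ a t) ∧ Ok ε (fun t => (a t).toNat)) ∧
      ((∀ t, 0 ≤ b t) ∧ Ok ε (fun t => (b t).toNat)) then
    Finsupp.single (⟨fun t => (a t).toNat, h.1.2⟩, ⟨fun t => (b t).toNat, h.2.2⟩) 1
  else 0

/-- The linear endomorphism of a free module determined by images of basis vectors. -/
def mkEnd (L : Type) [Field L] {α : Type} (v : α → (α →₀ L)) :
    (α →₀ L) →ₗ[L] (α →₀ L) :=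
  Finsupp.lsum L fun m => LinearMap.toSpanSingleton L (α →₀ L) (v m)

/-- Product of vectors of `𝒲`, landing in `𝒲⊗𝒲`. -/
def tens (L : Type) [Field L] {n : ℕ} {ε : Fin n → Bool} (u v : W L ε) : WW L ε :=
  u.sum fun a ca => v.sum fun b cb => Finsupp.single (a, b) (ca * cb)

/-- The operator `A ⊗ B` on `𝒲⊗𝒲`. -/
def opT (L : Type) [Field L] {n : ℕ} {ε : Fin n → Bool}
    (A B : W L ε →ₗ[L] W L ε) : WW L ε →ₗ[L] WW L ε :=
  mkEnd L fun mm => tens L (A (Finsupp.single mm.1 1)) (B (Finsupp.single mm.2 1))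

/-- The subspace `𝒲_l ⊗ 𝒲_m` of `𝒲⊗𝒲`. -/
def WWlm (L : Type) [Field L] {n : ℕ} (ε : Fin n → Bool) (l m : ℕ) :
    Submodule L (WW L ε) :=
  Submodule.span L {v | ∃ p : Idx ε × Idx ε,
    (∑ t, p.1.1 t) = l ∧ (∑ t, p.2.1 t) = m ∧ v = Finsupp.single p 1}

/-- The subspace `𝒲_l` of `𝒲`. -/
def Wl (L : Type) [Field L] {n : ℕ} (ε : Fin n → Bool) (l : ℕ) : Submodule L (W L ε) :=
  Submodule.span L {v | ∃ p : Idx ε, (∑ t, p.1 t) = l ∧ v = Finsupp.single p 1}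

/-! ## The scalar field of formal Laurent series in `z` over `ℂ` -/

abbrev K : Type := LaurentSeries ℂ

/-- The power series `Σ_{c≥0} f(c) z^c` as an element of `K`. -/
def mkS (f : ℕ → ℂ) : K := HahnSeries.ofPowerSeries ℤ ℂ (PowerSeries.mk f)

/-- Constants `ℂ → K`. -/
def cK : ℂ →+* K := HahnSeries.C

/-- The variable `z ∈ K`. -/
def zK : K := mkS fun c => if c = 1 then 1 else 0

/-! ## The solutions of the Yang-Baxter equation -/

/-- The unnormalized trace solution `S₀(z)` acting on `𝒲⊗𝒲`. -/
def S0tr (q : ℂ) {n : ℕ} [NeZero n] (ε : Fin n → Bool) : WW K ε →ₗ[K] WW K ε :=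
  mkEnd K fun ij =>
    ∑ a ∈ Fintype.piFinset (fun t => Finset.range (ij.1.1 t + ij.2.1 t + 1)),
      mkS (trCoef q ε a (fun t => ij.1.1 t + ij.2.1 t - a t) ij.1.1 ij.2.1) •
        kk K ε (fun t => (a t : ℤ)) (fun t => (ij.1.1 t : ℤ) + (ij.2.1 t : ℤ) - (a t : ℤ))

/-- The unnormalized boundary solution `S₀^{1,1}(z)` acting on `𝒲⊗𝒲`. -/
def S0bd (q : ℂ) {n : ℕ} (ε : Fin n → Bool) : WW K ε →ₗ[K] WW K ε :=
  mkEnd K fun ij =>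
    ∑ a ∈ Fintype.piFinset (fun t => Finset.range (ij.1.1 t + ij.2.1 t + 1)),
      mkS (bdCoef q ε a (fun t => ij.1.1 t + ij.2.1 t - a t) ij.1.1 ij.2.1) •
        kk K ε (fun t => (a t : ℤ)) (fun t => (ij.1.1 t : ℤ) + (ij.2.1 t : ℤ) - (a t : ℤ))

/-- The unnormalized boundary solution `S₀^{s,t}(z)` acting on `𝒲⊗𝒲`. -/
def S0bdST (q : ℂ) (s t : ℕ) {n : ℕ} (ε : Fin n → Bool) : WW K ε →ₗ[K] WW K ε :=
  mkEnd K fun ij =>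
    ∑ a ∈ Fintype.piFinset (fun u => Finset.range (ij.1.1 u + ij.2.1 u + 1)),
      mkS (bdCoefST q s t ε a (fun u => ij.1.1 u + ij.2.1 u - a u) ij.1.1 ij.2.1) •
        kk K ε (fun u => (a u : ℤ)) (fun u => (ij.1.1 u : ℤ) + (ij.2.1 u : ℤ) - (a u : ℤ))

/-- The diagonal gauge operator; `Kdiag pc ε s |m⟩ = pc^{s·(m₁+⋯+m_n)} |m⟩`
(`s = -1` gives `K`, `s = 1` gives `K⁻¹`). -/
def Kdiag (pc : ℂ) {n : ℕ} (ε : Fin n → Bool) (s : ℤ) : W K ε →ₗ[K] W K ε :=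
  mkEnd K fun m => cK (pc ^ (s * ∑ t, (m.1 t : ℤ))) • Finsupp.single m 1

/-- The gauge transformed boundary solution `S̃₀^{1,1}(z) = (K⊗1) S₀^{1,1}(z) (1⊗K⁻¹)`. -/
def S0bdT (q pc : ℂ) {n : ℕ} (ε : Fin n → Bool) : WW K ε →ₗ[K] WW K ε :=
  opT K (Kdiag pc ε (-1)) LinearMap.id ∘ₗ S0bd q ε ∘ₗ opT K LinearMap.id (Kdiag pc ε 1)

/-! ## The generalized quantum group actions -/

/-- Value of an occupation vector at a natural-number position. -/
def av {n : ℕ} (m : Fin n → ℕ) (p : ℕ) : ℕ := if h : p < n then m ⟨p, h⟩ else 0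

/-- Unit coordinate vector at a natural-number position. -/
def dlt {n : ℕ} (p : ℕ) : Fin n → ℤ := fun t => if (t : ℕ) = p then 1 else 0

/-- `q_i = q` if `ε_i = 0` and `-q⁻¹` if `ε_i = 1` (0-based positions). -/
def qc (q : ℂ) {n : ℕ} (ε : Fin n → Bool) (p : ℕ) : ℂ :=
  if h : p < n then (if ε ⟨p, h⟩ then -q⁻¹ else q) else q

/-- Type A generator `e_r` of the action `π_x`. -/
def eA (q : ℂ) {L : Type} [Field L] (ι : ℂ →+* L) {n : ℕ} (ε : Fin n → Bool) (x : L)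
    (r : Fin n) : W L ε →ₗ[L] W L ε :=
  mkEnd L fun m =>
    (x ^ (if (r : ℕ) = 0 then 1 else 0) * ι (qnum q (av m.1 (((r : ℕ) + n - 1) % n)))) •
      ket L ε fun t => (m.1 t : ℤ) - dlt (((r : ℕ) + n - 1) % n) t + dlt (r : ℕ) t

/-- Type A generator `f_r` of the action `π_x`. -/
def fA (q : ℂ) {L : Type} [Field L] (ι : ℂ →+* L) {n : ℕ} (ε : Fin n → Bool) (x : L)
    (r : Fin n) : W L ε →ₗ[L] W L ε :=
  mkEnd L fun m =>
    (x ^ (if (r : ℕ) = 0 then (-1 : ℤ) else 0) * ι (qnum q (av m.1 (r : ℕ)))) •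
      ket L ε fun t => (m.1 t : ℤ) + dlt (((r : ℕ) + n - 1) % n) t - dlt (r : ℕ) t

/-- Type A generator `k_r^{s}` (`s = ±1`) of the action `π_x`. -/
def kA (q : ℂ) {L : Type} [Field L] (ι : ℂ →+* L) {n : ℕ} (ε : Fin n → Bool) (s : ℤ)
    (r : Fin n) : W L ε →ₗ[L] W L ε :=
  mkEnd L fun m =>
    ι ((qc q ε (((r : ℕ) + n - 1) % n) ^ (-(av m.1 (((r : ℕ) + n - 1) % n) : ℤ)) *
        qc q ε (r : ℕ) ^ (av m.1 (r : ℕ) : ℤ)) ^ s) • Finsupp.single m 1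

/-- Type B generator `e_r` of the action `π_x`. -/
def eB (q : ℂ) {L : Type} [Field L] (ι : ℂ →+* L) {n : ℕ} (ε : Fin n → Bool) (x : L)
    (r : Fin (n + 1)) : W L ε →ₗ[L] W L ε :=
  mkEnd L fun m =>
    if (r : ℕ) = 0 then x • ket L ε (fun t => (m.1 t : ℤ) + dlt 0 t)
    else if (r : ℕ) = n then
      ι (qnum q (av m.1 (n - 1))) • ket L ε (fun t => (m.1 t : ℤ) - dlt (n - 1) t)
    else
      ι (qnum q (av m.1 ((r : ℕ) - 1))) •
        ket L ε (fun t => (m.1 t : ℤ) - dlt ((r : ℕ) - 1) t + dlt (r : ℕ) t)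

/-- Type B generator `f_r` of the action `π_x`. -/
def fB (q : ℂ) {L : Type} [Field L] (ι : ℂ →+* L) {n : ℕ} (ε : Fin n → Bool) (x : L)
    (r : Fin (n + 1)) : W L ε →ₗ[L] W L ε :=
  mkEnd L fun m =>
    if (r : ℕ) = 0 then
      (x⁻¹ * ι (qnum q (av m.1 0))) • ket L ε (fun t => (m.1 t : ℤ) - dlt 0 t)
    else if (r : ℕ) = n then ket L ε (fun t => (m.1 t : ℤ) + dlt (n - 1) t)
    else
      ι (qnum q (av m.1 (r : ℕ))) •
        ket L ε (fun t => (m.1 t : ℤ) + dlt ((r : ℕ) - 1) t - dlt (r : ℕ) t)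

/-- Type B generator `k_r^{s}` (`s = ±1`) of the action `π_x`; `pc = i q^{-1/2}`. -/
def kB (q pc : ℂ) {L : Type} [Field L] (ι : ℂ →+* L) {n : ℕ} (ε : Fin n → Bool) (s : ℤ)
    (r : Fin (n + 1)) : W L ε →ₗ[L] W L ε :=
  mkEnd L fun m =>
    ι ((if (r : ℕ) = 0 then pc⁻¹ * qc q ε 0 ^ (av m.1 0 : ℤ)
        else if (r : ℕ) = n then pc * qc q ε (n - 1) ^ (-(av m.1 (n - 1) : ℤ))
        else qc q ε ((r : ℕ) - 1) ^ (-(av m.1 ((r : ℕ) - 1) : ℤ)) *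
          qc q ε (r : ℕ) ^ (av m.1 (r : ℕ) : ℤ)) ^ s) • Finsupp.single m 1

/-! ## Coproduct actions on `𝒲⊗𝒲` (type A) -/

/-- `Δ(e_r) = 1⊗e_r + e_r⊗k_r`, with `π_x` on the first factor, `π_y` on the second. -/
def dE (q : ℂ) {L : Type} [Field L] (ι : ℂ →+* L) {n : ℕ} (ε : Fin n → Bool) (x y : L)
    (r : Fin n) : WW L ε →ₗ[L] WW L ε :=
  opT L LinearMap.id (eA q ι ε y r) + opT L (eA q ι ε x r) (kA q ι ε 1 r)

/-- `Δ'(e_r) = e_r⊗1 + k_r⊗e_r`. -/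
def dE' (q : ℂ) {L : Type} [Field L] (ι : ℂ →+* L) {n : ℕ} (ε : Fin n → Bool) (x y : L)
    (r : Fin n) : WW L ε →ₗ[L] WW L ε :=
  opT L (eA q ι ε x r) LinearMap.id + opT L (kA q ι ε 1 r) (eA q ι ε y r)

/-- `Δ(f_r) = f_r⊗1 + k_r⁻¹⊗f_r`. -/
def dF (q : ℂ) {L : Type} [Field L] (ι : ℂ →+* L) {n : ℕ} (ε : Fin n → Bool) (x y : L)
    (r : Fin n) : WW L ε →ₗ[L] WW L ε :=
  opT L (fA q ι ε x r) LinearMap.id + opT L (kA q ι ε (-1) r) (fA q ι ε y r)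

/-- `Δ'(f_r) = 1⊗f_r + f_r⊗k_r⁻¹`. -/
def dF' (q : ℂ) {L : Type} [Field L] (ι : ℂ →+* L) {n : ℕ} (ε : Fin n → Bool) (x y : L)
    (r : Fin n) : WW L ε →ₗ[L] WW L ε :=
  opT L LinearMap.id (fA q ι ε y r) + opT L (fA q ι ε x r) (kA q ι ε (-1) r)

/-- `Δ(k_r^s) = Δ'(k_r^s) = k_r^s ⊗ k_r^s`. -/
def dK (q : ℂ) {L : Type} [Field L] (ι : ℂ →+* L) {n : ℕ} (ε : Fin n → Bool) (s : ℤ)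
    (r : Fin n) : WW L ε →ₗ[L] WW L ε :=
  opT L (kA q ι ε s r) (kA q ι ε s r)

/-! ## Coproduct actions on `𝒲⊗𝒲` (type B) -/

def dEB (q pc : ℂ) {L : Type} [Field L] (ι : ℂ →+* L) {n : ℕ} (ε : Fin n → Bool) (x y : L)
    (r : Fin (n + 1)) : WW L ε →ₗ[L] WW L ε :=
  opT L LinearMap.id (eB q ι ε y r) + opT L (eB q ι ε x r) (kB q pc ι ε 1 r)

def dEB' (q pc : ℂ) {L : Type} [Field L] (ι : ℂ →+* L) {n : ℕ} (ε : Fin n → Bool) (x y : L)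
    (r : Fin (n + 1)) : WW L ε →ₗ[L] WW L ε :=
  opT L (eB q ι ε x r) LinearMap.id + opT L (kB q pc ι ε 1 r) (eB q ι ε y r)

def dFB (q pc : ℂ) {L : Type} [Field L] (ι : ℂ →+* L) {n : ℕ} (ε : Fin n → Bool) (x y : L)
    (r : Fin (n + 1)) : WW L ε →ₗ[L] WW L ε :=
  opT L (fB q ι ε x r) LinearMap.id + opT L (kB q pc ι ε (-1) r) (fB q ι ε y r)

def dFB' (q pc : ℂ) {L : Type} [Field L] (ι : ℂ →+* L) {n : ℕ} (ε : Fin n → Bool) (x y : L)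
    (r : Fin (n + 1)) : WW L ε →ₗ[L] WW L ε :=
  opT L LinearMap.id (fB q ι ε y r) + opT L (fB q ι ε x r) (kB q pc ι ε (-1) r)

def dKB (q pc : ℂ) {L : Type} [Field L] (ι : ℂ →+* L) {n : ℕ} (ε : Fin n → Bool) (s : ℤ)
    (r : Fin (n + 1)) : WW L ε →ₗ[L] WW L ε :=
  opT L (kB q pc ι ε s r) (kB q pc ι ε s r)

/-! ## Structure constants -/

/-- Type A structure constant `D_{i,j}` (as a product over 0-based positions). -/
def DA (q : ℂ) {n : ℕ} (ε : Fin n → Bool) (i j : Fin n) : ℂ :=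
  ∏ p ∈ (({((i : ℕ) + n - 1) % n, (i : ℕ)} : Finset ℕ) ∩
      ({((j : ℕ) + n - 1) % n, (j : ℕ)} : Finset ℕ)),
    qc q ε p ^ (if i = j then (1 : ℤ) else -1)

/-- The set `⟨i⟩ = {i, i+1} ∩ [1,n]` of type B, translated to 0-based positions. -/
def nodeB (n i : ℕ) : Finset ℕ :=
  if i = 0 then {0} else if i = n then {n - 1} else {i - 1, i}

/-- Type B structure constant `D_{i,j}`. -/
def DB (q : ℂ) {n : ℕ} (ε : Fin n → Bool) (i j : Fin (n + 1)) : ℂ :=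
  ∏ p ∈ nodeB n (i : ℕ) ∩ nodeB n (j : ℕ), qc q ε p ^ (if i = j then (1 : ℤ) else -1)

/-! ## Distinguished vectors -/

/-- The vector `J_{n,j} = Σ_{i, Σi=j} q^{inv(i)} |i⟩⊗|1-i⟩`. -/
def Jfull (q : ℂ) {L : Type} [Field L] (ι : ℂ →+* L) {n : ℕ} (ε : Fin n → Bool)
    (j : ℕ) : WW L ε :=
  ∑ i ∈ Fintype.piFinset (fun _ : Fin n => Finset.range 2),
    (if (∑ t, i t) = j then
        ι (q ^ (∑ s : Fin n, ∑ t : Fin n, if s < t then i s * (1 - i t) else 0))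
      else 0) •
      kk L ε (fun t => (i t : ℤ)) (fun t => 1 - (i t : ℤ))

/-- Extension of a `Fin s`-tuple to `ℕ` by zero. -/
def ivf {s : ℕ} (i : Fin s → ℕ) : ℕ → ℕ := fun p => if h : p < s then i ⟨p, h⟩ else 0

/-- `inv(i₁,…,i_s) = Σ_{p<r} i_p (1 - i_r)`. -/
def invv (s : ℕ) (iv : ℕ → ℕ) : ℕ :=
  ∑ p ∈ Finset.range s, ∑ r ∈ Finset.range s, if p < r then iv p * (1 - iv r) else 0

/-- Occupation vector `(0^{nn-s-t}, i₁,…,i_s, 1^t)`. -/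
def winA (nn s t : ℕ) (iv : ℕ → ℕ) : Fin nn → ℤ := fun u =>
  if (u : ℕ) < nn - s - t then 0
  else if (u : ℕ) < nn - t then (iv ((u : ℕ) - (nn - s - t)) : ℤ)
  else 1

/-- The singular vector `ξ_t^{l,m}` for `κ = n`. -/
def xiA (q : ℂ) {L : Type} [Field L] (ι : ℂ →+* L) {n : ℕ} (ε : Fin n → Bool)
    (l m t : ℕ) : WW L ε :=
  ∑ i ∈ Fintype.piFinset (fun _ : Fin (l + m - 2 * t) => Finset.range 2),
    (if (∑ u, i u) = l - t then ι (q ^ invv (l + m - 2 * t) (ivf i)) else 0) •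
      kk L ε (winA n (l + m - 2 * t) t (ivf i))
        (winA n (l + m - 2 * t) t (fun p => 1 - ivf i p))

/-- Occupation vector `(0^{nn-s-1}, i₁,…,i_s, last)`. -/
def winA1 (nn s : ℕ) (iv : ℕ → ℕ) (last : ℤ) : Fin nn → ℤ := fun u =>
  if (u : ℕ) < nn - s - 1 then 0
  else if (u : ℕ) < nn - 1 then (iv ((u : ℕ) - (nn - s - 1)) : ℤ)
  else last

/-- The singular vector `ξ_s^{l,m}` for `κ = n-1`. -/
def xiA1 (q : ℂ) {L : Type} [Field L] (ι : ℂ →+* L) {n : ℕ} (ε : Fin n → Bool)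
    (l m s : ℕ) : WW L ε :=
  ∑ j ∈ Finset.range (s + 1),
    ∑ i ∈ Fintype.piFinset (fun _ : Fin s => Finset.range 2),
      (if (∑ u, i u) = s - j then
          ι ((-1 : ℂ) ^ j * q ^ (j * (m - s + 1)) * q ^ invv s (ivf i))
        else 0) •
        kk L ε (winA1 n s (ivf i) ((l : ℤ) + (j : ℤ) - (s : ℤ)))
          (winA1 n s (fun p => 1 - ivf i p) ((m : ℤ) - (j : ℤ)))

/-- The singular vector `ξ_s^{l,m}` for `0 ≤ κ ≤ n-2`. -/
def xiA2 (q : ℂ) {L : Type} [Field L] (ι : ℂ →+* L) {n : ℕ} (ε : Fin n → Bool)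
    (l m s : ℕ) : WW L ε :=
  ∑ j ∈ Finset.range (s + 1),
    ι ((-1 : ℂ) ^ j * q ^ ((j : ℤ) * (2 * (s : ℤ) - (m : ℤ) - (j : ℤ) - 1) + (m : ℤ) * (s : ℤ)) *
        qbin q s j) •
      kk L ε
        (fun u => if (u : ℕ) < n - 2 then 0
          else if (u : ℕ) = n - 2 then (j : ℤ) else (l : ℤ) - (j : ℤ))
        (fun u => if (u : ℕ) < n - 2 then 0
          else if (u : ℕ) = n - 2 then (s : ℤ) - (j : ℤ) else (m : ℤ) - (s : ℤ) + (j : ℤ))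

/-- The type B singular vector `ξ_l`. -/
def xiB (q pc : ℂ) {L : Type} [Field L] (ι : ℂ →+* L) {n : ℕ} (ε : Fin n → Bool)
    (l : ℕ) : WW L ε :=
  ∑ m ∈ Finset.range (l + 1),
    ι ((-pc) ^ (-(m : ℤ)) * q ^ ((m : ℤ) * (l : ℤ) - ((m * (m + 1) / 2 : ℕ) : ℤ)) *
        qbin q l m) •
      kk L ε (fun u => if (u : ℕ) = n - 1 then (m : ℤ) else 0)
        (fun u => if (u : ℕ) = n - 1 then (l : ℤ) - (m : ℤ) else 0)

/-! ## Miscellany -/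

/-- Apply a list of operators, the rightmost element of the list acting first. -/
def appList {L : Type} [Field L] {n : ℕ} {ε : Fin n → Bool}
    (ops : List (WW L ε →ₗ[L] WW L ε)) (v : WW L ε) : WW L ε :=
  ops.foldr (fun A w => A w) v

/-- A natural number as an element of `Fin n`. -/
def mfin {n : ℕ} [NeZero n] (p : ℕ) : Fin n :=
  ⟨p % n, Nat.mod_lt p (Nat.pos_of_ne_zero (NeZero.ne n))⟩

/-- Reference weight-`l` occupation vector: `(0^{n-l},1^l)` if `κ = n`, `l·e_n` otherwise. -/
def refAN (n κ l : ℕ) : Fin n → ℕ := fun t =>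
  if κ = n then (if n - l ≤ (t : ℕ) then 1 else 0) else (if (t : ℕ) = n - 1 then l else 0)

/-- The flip `P(u⊗v) = v⊗u` on `𝒲⊗𝒲`. -/
def Pop (L : Type) [Field L] {n : ℕ} (ε : Fin n → Bool) : WW L ε →ₗ[L] WW L ε :=
  mkEnd L fun p => Finsupp.single (p.2, p.1) 1

/-! ### Action of the generators on basis vectors -/

lemma mkEnd_single {L : Type} [Field L] {α : Type} (v : α → (α →₀ L)) (m : α) :
    mkEnd L v (Finsupp.single m 1) = v m := by
  simp [mkEnd]

lemma tens_single {L : Type} [Field L] {n : ℕ} {ε : Fin n → Bool} (A B : Idx ε) (c d : L) :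
    tens L (Finsupp.single A c) (Finsupp.single B d) = Finsupp.single (A, B) (c * d) := by
  simp [tens]

lemma tens_zero_left {L : Type} [Field L] {n : ℕ} {ε : Fin n → Bool} (v : W L ε) :
    tens L (0 : W L ε) v = 0 := by
  simp [tens]

lemma tens_zero_right {L : Type} [Field L] {n : ℕ} {ε : Fin n → Bool} (u : W L ε) :
    tens L u (0 : W L ε) = 0 := by
  simp [tens]

lemma opT_single {L : Type} [Field L] {n : ℕ} {ε : Fin n → Bool}
    (A B : W L ε →ₗ[L] W L ε) (a b : Idx ε) :
    opT L A B (Finsupp.single (a, b) 1)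
      = tens L (A (Finsupp.single a 1)) (B (Finsupp.single b 1)) := by
  simp [opT, mkEnd_single]

/-- The basis label of `𝒲 = V^{⊗n}` given by a `0/1` tuple. -/
def lab {n : ℕ} (a : Fin n → ℕ) (ha : ∀ t, a t ≤ 1) : Idx (fun _ : Fin n => true) :=
  ⟨a, fun t _ => ha t⟩

lemma qnum_one (q : ℂ) (hq0 : q ≠ 0) (hq : ∀ k : ℕ, k ≠ 0 → q ^ k ≠ 1) : qnum q 1 = 1 := by
  have h : q - q⁻¹ ≠ 0 := by
    intro h
    apply hq 2 (by norm_num)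
    field_simp at h
    linear_combination h
  simp [qnum, h]

/-- The cyclic predecessor of `r = p + 1` used by the type A generators is `p`. -/
lemma pred_mod {n : ℕ} {p r : Fin n} (hpr : (p : ℕ) + 1 = r) : ((r : ℕ) + n - 1) % n = p := by
  have : (r : ℕ) + n - 1 = p + n := by omega
  rw [this, Nat.add_mod_right, Nat.mod_eq_of_lt p.2]

lemma av_coe {n : ℕ} (m : Fin n → ℕ) (p : Fin n) : av m (p : ℕ) = m p := by
  simp [av]

lemma eA_single_act (q : ℂ) (hq0 : q ≠ 0) (hq : ∀ k : ℕ, k ≠ 0 → q ^ k ≠ 1)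
    {L : Type} [Field L] (ι : ℂ →+* L) (x : L) {n : ℕ} {p r : Fin n}
    (hpr : (p : ℕ) + 1 = r) (a : Fin n → ℕ) (ha : ∀ t, a t ≤ 1) (hp : a p = 1) (hr : a r = 0) :
    eA q ι (fun _ => true) x r (Finsupp.single (lab a ha) 1)
      = Finsupp.single (lab (fun t => a (Equiv.swap p r t)) (fun _ => ha _)) 1 := by
  have hr0 : (r : ℕ) ≠ 0 := by omega
  have hne : p ≠ r := by rintro rfl; omega
  have key : (fun t => (a t : ℤ) - dlt (p : ℕ) t + dlt (r : ℕ) t)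
      = fun t => ((a (Equiv.swap p r t) : ℕ) : ℤ) := by
    funext t
    by_cases h1 : t = p
    · subst h1
      simp [dlt, hp, hr, Fin.val_inj, hne]
    · by_cases h2 : t = r
      · subst h2
        simp [dlt, hp, hr, Fin.val_inj, hne.symm]
      · simp [dlt, Fin.val_inj, h1, h2, Equiv.swap_apply_of_ne_of_ne]
  rw [eA, mkEnd_single, pred_mod hpr]
  simp only [lab, av_coe, hp, qnum_one q hq0 hq, key, hr0, if_false, pow_zero, map_one, mul_one,
    one_smul]
  rw [ket, dif_pos ⟨fun t => by positivity, fun t _ => by simpa using ha _⟩]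
  simp

lemma eA_single_zero (q : ℂ) {L : Type} [Field L] (ι : ℂ →+* L) (x : L) {n : ℕ} {p r : Fin n}
    (hpr : (p : ℕ) + 1 = r) (a : Fin n → ℕ) (ha : ∀ t, a t ≤ 1) (h : ¬ (a p = 1 ∧ a r = 0)) :
    eA q ι (fun _ => true) x r (Finsupp.single (lab a ha) 1) = 0 := by
  have hne : p ≠ r := by rintro rfl; omega
  rw [eA, mkEnd_single, pred_mod hpr]
  have hp := ha p
  have hr := ha r
  rcases Nat.eq_zero_or_pos (a p) with h0 | h0
  · simp [lab, av_coe, h0, qnum]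
  · -- The target position is occupied, so the resulting ket is out of range.
    have h1 : a r = 1 := by omega
    rw [ket, dif_neg, smul_zero]
    rintro ⟨-, hok⟩
    have := hok r rfl
    simp [lab, dlt, h1, Fin.val_inj, hne.symm] at this

lemma kA_single (q : ℂ) {L : Type} [Field L] (ι : ℂ →+* L) {n : ℕ} {p r : Fin n}
    (hpr : (p : ℕ) + 1 = r) (a : Fin n → ℕ) (ha : ∀ t, a t ≤ 1) (hp : a p = 0) (hr : a r = 1) :
    kA q ι (fun _ => true) 1 r (Finsupp.single (lab a ha) 1)
      = Finsupp.single (lab a ha) (ι (-q⁻¹)) := by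
  rw [kA, mkEnd_single, pred_mod hpr, Finsupp.smul_single, smul_eq_mul, mul_one]
  simp [lab, av_coe, hp, hr, qc]

lemma kk_lab (L : Type) [Field L] {n : ℕ} (a : Fin n → ℕ) (ha : ∀ t, a t ≤ 1) :
    kk L (fun _ => true) (fun t => (a t : ℤ)) (fun t => 1 - (a t : ℤ))
      = Finsupp.single (lab a ha, lab (fun t => 1 - a t) (fun t => by omega)) 1 := by
  rw [kk, dif_pos]
  · simp [lab]
  · refine ⟨⟨fun t => by positivity, fun t _ => by simpa using ha t⟩,
      fun t => ?_, fun t _ => ?_⟩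
    · have := ha t; omega
    · show (1 - (a t : ℤ)).toNat ≤ 1
      omega

/-! ### Inversions and the cancellation -/

/-- The exponent `inv(a) = Σ_{s<t} a_s (1 - a_t)` appearing in `J_{n,j}`. -/
def invF {n : ℕ} (a : Fin n → ℕ) : ℕ :=
  ∑ s : Fin n, ∑ t : Fin n, if s < t then a s * (1 - a t) else 0

/-- Interchanging adjacent entries `(0, 1)` into `(1, 0)` raises `inv` by one: after reindexing
both sums along the transposition, only the pair of positions `(r, p)` contributes differently. -/
lemma inv_swap {n : ℕ} {p r : Fin n} (hpr : (p : ℕ) + 1 = r) (a : Fin n → ℕ)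
    (hp : a p = 0) (hr : a r = 1) :
    invF (fun t => a (Equiv.swap p r t)) = invF a + 1 := by
  have h1 : invF (fun t => a (Equiv.swap p r t)) = ∑ s : Fin n, ∑ t : Fin n,
      if Equiv.swap p r s < Equiv.swap p r t then a s * (1 - a t) else 0 := by
    rw [invF, ← Equiv.sum_comp (Equiv.swap p r)]
    refine Finset.sum_congr rfl fun s _ => ?_
    rw [← Equiv.sum_comp (Equiv.swap p r)]
    simp
  have h2 : ∑ s : Fin n, ∑ t : Fin n, (if s = r then if t = p then 1 else 0 else 0) = 1 := by
    simp
  rw [h1, invF, ← h2, ← Finset.sum_add_distrib]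
  refine Finset.sum_congr rfl fun s _ => ?_
  rw [← Finset.sum_add_distrib]
  refine Finset.sum_congr rfl fun t _ => ?_
  simp only [Equiv.swap_apply_def]
  by_cases s1 : s = p <;> by_cases s2 : s = r <;> by_cases t1 : t = p <;> by_cases t2 : t = r <;>
    simp only [s1, s2, t1, t2, if_true, if_false, hp, hr] <;>
    simp only [Fin.lt_def, Fin.ext_iff] at * <;> split_ifs <;> omega

/-- The coefficient of `|a⟩⊗|1-a⟩` in `J_{n,j}`. -/
def coefJ (q : ℂ) {L : Type} [Field L] (ι : ℂ →+* L) {n : ℕ} (j : ℕ) (a : Fin n → ℕ) : L :=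
  if (∑ t, a t) = j then ι (q ^ invF a) else 0

/-- The `1⊗e_r` image of the term of `J_{n,j}` at `a` cancels the `e_r⊗k_r` image of the term at
the tuple with entries `p` and `r = p + 1` of `a` interchanged. -/
lemma pair_cancel (q : ℂ) (hq0 : q ≠ 0) (hq : ∀ k : ℕ, k ≠ 0 → q ^ k ≠ 1)
    {L : Type} [Field L] (ι : ℂ →+* L) (x y : L) {n : ℕ} (j : ℕ) {p r : Fin n}
    (hpr : (p : ℕ) + 1 = r) (a : Fin n → ℕ) (ha : ∀ t, a t ≤ 1) :
    coefJ q ι j a • opT L LinearMap.id (eA q ι (fun _ => true) y r)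
        (kk L (fun _ => true) (fun t => (a t : ℤ)) (fun t => 1 - (a t : ℤ)))
      + coefJ q ι j (fun t => a (Equiv.swap p r t)) •
        opT L (eA q ι (fun _ => true) x r) (kA q ι (fun _ => true) 1 r)
          (kk L (fun _ => true) (fun t => (a (Equiv.swap p r t) : ℤ))
            (fun t => 1 - (a (Equiv.swap p r t) : ℤ))) = 0 := by
  rw [kk_lab L a ha, kk_lab L (fun t => a (Equiv.swap p r t)) (fun _ => ha _), opT_single,
    opT_single]
  by_cases h : a p = 0 ∧ a r = 1
  · obtain ⟨hp, hr⟩ := h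
    have hsum : ∑ t, a (Equiv.swap p r t) = ∑ t, a t := Equiv.sum_comp (Equiv.swap p r) a
    rw [eA_single_act q hq0 hq ι y hpr _ _ (by simp [hp]) (by simp [hr]),
      eA_single_act q hq0 hq ι x hpr _ _ (by simp [hr]) (by simp [hp]),
      kA_single q ι hpr _ _ (by simp [hr]) (by simp [hp])]
    simp only [Equiv.swap_apply_self, LinearMap.id_apply, tens_single, Finsupp.smul_single,
      ← Finsupp.single_add, coefJ, hsum, inv_swap hpr a hp hr]
    rw [Finsupp.single_eq_zero]
    split_ifs
    · simp only [smul_eq_mul, mul_one, one_mul, ← map_mul, ← map_add]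
      rw [← map_zero ι]
      congr 1
      field_simp
      ring
    · simp
  · have hp := ha p
    have hr := ha r
    rw [eA_single_zero q ι y hpr _ _ (by omega),
      eA_single_zero q ι x hpr _ _
        (by simp only [Equiv.swap_apply_left, Equiv.swap_apply_right]; omega),
      tens_zero_left, tens_zero_right]
    simp

/-- `Δ(e_i) J_{n,j} = 0` for `1 ≤ i ≤ n-1`, `0 ≤ j ≤ n`. -/
theorem statement_7 (q : ℂ) (hq0 : q ≠ 0) (hq : ∀ k : ℕ, k ≠ 0 → q ^ k ≠ 1)
    {L : Type} [Field L] (ι : ℂ →+* L) (x y : L) (hx : x ≠ 0) (hy : y ≠ 0)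
    (n : ℕ) [NeZero n] (hn : 2 ≤ n) (ε : Fin n → Bool) (hε : ε = fun _ => true)
    (j : ℕ) (hj : j ≤ n) (i : Fin n) (hi : (i : ℕ) ≠ 0) :
    dE q ι ε x y i (Jfull q ι ε j) = 0 := by
  subst hε
  obtain ⟨p, hpr⟩ : ∃ p : Fin n, (p : ℕ) + 1 = i :=
    ⟨⟨(i : ℕ) - 1, by omega⟩, by simp only; omega⟩
  have hJ : Jfull q ι (fun _ : Fin n => true) j
      = ∑ a ∈ Fintype.piFinset (fun _ : Fin n => Finset.range 2), coefJ q ι j a •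
        kk L (fun _ => true) (fun t => (a t : ℤ)) (fun t => 1 - (a t : ℤ)) := rfl
  rw [hJ, dE, LinearMap.add_apply, map_sum, map_sum]
  simp only [map_smul]
  have hre : ∑ a ∈ Fintype.piFinset (fun _ : Fin n => Finset.range 2), coefJ q ι j a •
        opT L (eA q ι (fun _ => true) x i) (kA q ι (fun _ => true) 1 i)
          (kk L (fun _ => true) (fun t => (a t : ℤ)) (fun t => 1 - (a t : ℤ)))
      = ∑ a ∈ Fintype.piFinset (fun _ : Fin n => Finset.range 2),
        coefJ q ι j (fun t => a (Equiv.swap p i t)) •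
        opT L (eA q ι (fun _ => true) x i) (kA q ι (fun _ => true) 1 i)
          (kk L (fun _ => true) (fun t => (a (Equiv.swap p i t) : ℤ))
            (fun t => 1 - (a (Equiv.swap p i t) : ℤ))) := by
    refine Finset.sum_nbij' (fun a t => a (Equiv.swap p i t)) (fun a t => a (Equiv.swap p i t))
      ?_ ?_ ?_ ?_ ?_
    · intro a ha
      exact Fintype.mem_piFinset.2 fun t => Fintype.mem_piFinset.1 ha _
    · intro a ha
      exact Fintype.mem_piFinset.2 fun t => Fintype.mem_piFinset.1 ha _
    · intro a _
      simp
    · intro a _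
      simp
    · intro a _
      simp
  rw [hre, ← Finset.sum_add_distrib]
  refine Finset.sum_eq_zero fun a ha => pair_cancel q hq0 hq ι x y j hpr a fun t => ?_
  have := Finset.mem_range.1 (Fintype.mem_piFinset.1 ha t)
  omega

end TetraGQ
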